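/- Suppose H_A = C^d, Alice's measurement is the full Bell state measurement {M_a = (U_a ⊗ 1)Φ+(U_a† ⊗ 1)}_{a=0}^{d²−1} on V ⊗ A, and the input set {ω_x} is tomographically complete. Then the optimal value ν of the negativity-estimation optimization (minimize Σ_a tr[σ⁻_{a|ω_x}] over M*_{a,±} ≥ 0 on V ⊗ H_B and Hermitian ρ_± on H_B with σ_{a|ω_x} = tr_V[M*_{a,+}(ω_x ⊗ 1_B)] − tr_V[M*_{a,−}(ω_x ⊗ 1_B)] for all a, x and Σ_a M*_{a,±} = 1_V ⊗ ρ_±) equals the entanglement negativity: ν = N(ρ^{AB}). -/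

import Mathlib

open Matrix ComplexOrder
open scoped Kronecker

namespace Tele

noncomputable def ptrace₁ {V B : Type*} [Fintype V]
    (M : Matrix (V × B) (V × B) ℂ) : Matrix B B ℂ :=
  Matrix.of fun b b' => ∑ v, M (v, b) (v, b')

noncomputable def ptrace₂ {V B : Type*} [Fintype B]
    (M : Matrix (V × B) (V × B) ℂ) : Matrix V V ℂ :=
  Matrix.of fun v v' => ∑ b, M (v, b) (v', b)

noncomputable def ptraceMid {V A B : Type*} [Fintype A]
    (M : Matrix (V × A × B) (V × A × B) ℂ) : Matrix (V × B) (V × B) ℂ :=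
  Matrix.of fun p q => ∑ a, M (p.1, a, p.2) (q.1, a, q.2)

noncomputable def ptraceVA {V A B : Type*} [Fintype V] [Fintype A]
    (M : Matrix (V × A × B) (V × A × B) ℂ) : Matrix B B ℂ :=
  Matrix.of fun b b' => ∑ v, ∑ a, M (v, a, b) (v, a, b')

noncomputable def ptraceV₁A {V V₁ A B : Type*} [Fintype V₁] [Fintype A]
    (M : Matrix (V × V₁ × A × B) (V × V₁ × A × B) ℂ) : Matrix (V × B) (V × B) ℂ :=
  Matrix.of fun p q => ∑ v₁, ∑ a, M (p.1, v₁, a, p.2) (q.1, v₁, a, q.2)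

def ptranspose₁ {V B : Type*} (M : Matrix (V × B) (V × B) ℂ) : Matrix (V × B) (V × B) ℂ :=
  Matrix.of fun p q => M (q.1, p.2) (p.1, q.2)

def ptranspose₂ {V B : Type*} (M : Matrix (V × B) (V × B) ℂ) : Matrix (V × B) (V × B) ℂ :=
  Matrix.of fun p q => M (p.1, q.2) (q.1, p.2)

def Separable {V B : Type*} [Fintype V] [Fintype B]
    (M : Matrix (V × B) (V × B) ℂ) : Prop :=
  ∃ (n : ℕ) (τ : Fin n → Matrix V V ℂ) (χ : Fin n → Matrix B B ℂ),
    (∀ i, (τ i).PosSemidef) ∧ (∀ i, (χ i).PosSemidef) ∧ M = ∑ i, τ i ⊗ₖ χ i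

def IsState {V : Type*} [Fintype V] (ρ : Matrix V V ℂ) : Prop :=
  ρ.PosSemidef ∧ ρ.trace = 1

noncomputable def maxEnt (d : ℕ) : Matrix (Fin d × Fin d) (Fin d × Fin d) ℂ :=
  Matrix.of fun p q => if p.1 = p.2 ∧ q.1 = q.2 then (d : ℂ)⁻¹ else 0

noncomputable def chanOp {V A B : Type*} [Fintype V] [Fintype A] [Fintype B]
    [DecidableEq V] [DecidableEq B]
    (M : Matrix (V × A) (V × A) ℂ) (ρ : Matrix (A × B) (A × B) ℂ) :
    Matrix (V × B) (V × B) ℂ :=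
  ptraceMid ((Matrix.reindex (Equiv.prodAssoc V A B) (Equiv.prodAssoc V A B)
      (M ⊗ₖ (1 : Matrix B B ℂ))) * ((1 : Matrix V V ℂ) ⊗ₖ ρ))

noncomputable def teleA {V A B : Type*} [Fintype V] [Fintype A] [Fintype B] [DecidableEq B]
    (M : Matrix (V × A) (V × A) ℂ) (ρ : Matrix (A × B) (A × B) ℂ) (ω : Matrix V V ℂ) :
    Matrix B B ℂ :=
  ptraceVA ((Matrix.reindex (Equiv.prodAssoc V A B) (Equiv.prodAssoc V A B)
      (M ⊗ₖ (1 : Matrix B B ℂ))) * (ω ⊗ₖ ρ))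

noncomputable def margOp {V A : Type*} [Fintype V] [Fintype A] [DecidableEq V]
    (M : Matrix (V × A) (V × A) ℂ) (ρA : Matrix A A ℂ) : Matrix V V ℂ :=
  ptrace₂ (M * ((1 : Matrix V V ℂ) ⊗ₖ ρA))

noncomputable def piOp {A B : Type*} [Fintype A] [Fintype B] [DecidableEq B]
    (χ : Matrix A A ℂ) (ρ : Matrix (A × B) (A × B) ℂ) : Matrix B B ℂ :=
  ptrace₁ ((χ ⊗ₖ (1 : Matrix B B ℂ)) * ρ)

def TomoComplete {V X : Type*} [Fintype V] (ω : X → Matrix V V ℂ) : Prop :=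
  ∀ H : Matrix V V ℂ, H.IsHermitian → H ∈ Submodule.span ℝ (Set.range ω)

noncomputable def shiftX (d : ℕ) : Matrix (Fin d) (Fin d) ℂ :=
  Matrix.of fun i j => if (i : ℕ) = ((j : ℕ) + 1) % d then 1 else 0

noncomputable def clockZ (d : ℕ) : Matrix (Fin d) (Fin d) ℂ :=
  Matrix.of fun i j =>
    if i = j then Complex.exp (2 * (Real.pi : ℂ) * Complex.I * ((i : ℕ) : ℂ) / (d : ℂ)) else 0

noncomputable def HW (d : ℕ) (a : Fin d × Fin d) : Matrix (Fin d) (Fin d) ℂ :=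
  shiftX d ^ (a.1 : ℕ) * clockZ d ^ (a.2 : ℕ)

noncomputable def bellPOVM (d : ℕ) (a : Fin d × Fin d) :
    Matrix (Fin d × Fin d) (Fin d × Fin d) ℂ :=
  (HW d a ⊗ₖ (1 : Matrix (Fin d) (Fin d) ℂ)) * maxEnt d *
    ((HW d a)ᴴ ⊗ₖ (1 : Matrix (Fin d) (Fin d) ℂ))

noncomputable def negativity {A B : Type*} [Fintype A] [Fintype B]
    (ρ : Matrix (A × B) (A × B) ℂ) : ℝ :=
  sInf {t : ℝ | ∃ ρp ρm : Matrix (A × B) (A × B) ℂ,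
    ρ = ρp - ρm ∧ (ptranspose₁ ρp).PosSemidef ∧ (ptranspose₁ ρm).PosSemidef ∧
    t = (ρm.trace).re}

noncomputable def epsGen {A B : Type*} [Fintype A] [Fintype B]
    (ρ : Matrix (A × B) (A × B) ℂ) : ℝ :=
  sInf {r : ℝ | 0 ≤ r ∧ ∃ ρs : Matrix (A × B) (A × B) ℂ, IsState ρs ∧
    Separable ((((1 + r : ℝ) : ℂ))⁻¹ • (ρ + ((r : ℝ) : ℂ) • ρs))}

noncomputable def epsSep {A B : Type*} [Fintype A] [Fintype B]
    (ρ : Matrix (A × B) (A × B) ℂ) : ℝ :=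
  sInf {r : ℝ | 0 ≤ r ∧ ∃ ρs : Matrix (A × B) (A × B) ℂ, IsState ρs ∧ Separable ρs ∧
    Separable ((((1 + r : ℝ) : ℂ))⁻¹ • (ρ + ((r : ℝ) : ℂ) • ρs))}

noncomputable def epsR {A B : Type*} [Fintype A] [Fintype B] [DecidableEq A] [DecidableEq B]
    (ρ : Matrix (A × B) (A × B) ℂ) : ℝ :=
  sInf {r : ℝ | 0 ≤ r ∧
    Separable ((((1 + r : ℝ) : ℂ))⁻¹ •
      (ρ + ((r : ℝ) : ℂ) • ((Fintype.card (A × B) : ℂ)⁻¹ • (1 : Matrix (A × B) (A × B) ℂ))))}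

noncomputable def epsBSA {A B : Type*} [Fintype A] [Fintype B]
    (ρ : Matrix (A × B) (A × B) ℂ) : ℝ :=
  sInf {p : ℝ | 0 ≤ p ∧ p ≤ 1 ∧ ∃ ρs σS : Matrix (A × B) (A × B) ℂ,
    IsState ρs ∧ IsState σS ∧ Separable σS ∧
    ρ = ((p : ℝ) : ℂ) • ρs + (((1 - p : ℝ)) : ℂ) • σS}

noncomputable def tauGen {V B X ι : Type*} [Fintype V] [Fintype B] [Fintype ι]
    [DecidableEq V] [DecidableEq B]
    (ω : X → Matrix V V ℂ) (σ : ι → X → Matrix B B ℂ) : ℝ :=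
  sInf {r : ℝ | 0 ≤ r ∧ ∃ (m : ℕ) (ρs : Matrix (Fin m × B) (Fin m × B) ℂ)
      (N : ι → Matrix (V × Fin m) (V × Fin m) ℂ) (Ms : ι → Matrix (V × B) (V × B) ℂ),
      IsState ρs ∧ (∀ a, (N a).PosSemidef) ∧ ((∑ a, N a) = 1) ∧
      (∀ a, (Ms a).PosSemidef ∧ Separable (Ms a)) ∧
      (∀ a x, (((1 + r : ℝ) : ℂ))⁻¹ • (σ a x + ((r : ℝ) : ℂ) • teleA (N a) ρs (ω x)) =
        ptrace₁ (Ms a * (ω x ⊗ₖ (1 : Matrix B B ℂ)))) ∧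
      (∀ x, (∑ a, Ms a) = (1 : Matrix V V ℂ) ⊗ₖ
        ((((1 + r : ℝ) : ℂ))⁻¹ •
          ((∑ a, σ a x) + ((r : ℝ) : ℂ) • ∑ a, teleA (N a) ρs (ω x))))}

noncomputable def tauCl {V B X ι : Type*} [Fintype V] [Fintype B] [Fintype ι]
    [DecidableEq V] [DecidableEq B]
    (ω : X → Matrix V V ℂ) (σ : ι → X → Matrix B B ℂ) : ℝ :=
  sInf {r : ℝ | 0 ≤ r ∧ ∃ (Mb Ms : ι → Matrix (V × B) (V × B) ℂ),
    (∀ a, (Mb a).PosSemidef ∧ Separable (Mb a)) ∧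
    (∀ a, (Ms a).PosSemidef ∧ Separable (Ms a)) ∧
    (∀ x, (∑ a, Mb a) = (1 : Matrix V V ℂ) ⊗ₖ
      (∑ a, ptrace₁ (Mb a * (ω x ⊗ₖ (1 : Matrix B B ℂ))))) ∧
    (∀ a x, (((1 + r : ℝ) : ℂ))⁻¹ •
        (σ a x + ((r : ℝ) : ℂ) • ptrace₁ (Mb a * (ω x ⊗ₖ (1 : Matrix B B ℂ)))) =
      ptrace₁ (Ms a * (ω x ⊗ₖ (1 : Matrix B B ℂ)))) ∧
    (∀ x, (∑ a, Ms a) = (1 : Matrix V V ℂ) ⊗ₖ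
      ((((1 + r : ℝ) : ℂ))⁻¹ •
        ((∑ a, σ a x) + ((r : ℝ) : ℂ) •
          ∑ a, ptrace₁ (Mb a * (ω x ⊗ₖ (1 : Matrix B B ℂ))))))}

noncomputable def tauR {V B X ι : Type*} [Fintype V] [Fintype B] [Fintype ι]
    [DecidableEq V] [DecidableEq B]
    (ω : X → Matrix V V ℂ) (σ : ι → X → Matrix B B ℂ) : ℝ :=
  sInf {r : ℝ | 0 ≤ r ∧ ∃ (p : ι → ℝ) (Ms : ι → Matrix (V × B) (V × B) ℂ),
    (∀ a, 0 ≤ p a) ∧ ((∑ a, p a) = 1) ∧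
    (∀ a, (Ms a).PosSemidef ∧ Separable (Ms a)) ∧
    (∀ a x, (((1 + r : ℝ) : ℂ))⁻¹ •
        (σ a x + ((r * p a : ℝ) : ℂ) • ((Fintype.card B : ℂ)⁻¹ • (1 : Matrix B B ℂ))) =
      ptrace₁ (Ms a * (ω x ⊗ₖ (1 : Matrix B B ℂ)))) ∧
    (∀ x, (∑ a, Ms a) = (1 : Matrix V V ℂ) ⊗ₖ
      ((((1 + r : ℝ) : ℂ))⁻¹ •
        ((∑ a, σ a x) + ((r : ℝ) : ℂ) • ((Fintype.card B : ℂ)⁻¹ • (1 : Matrix B B ℂ)))))}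

noncomputable def TW {V B X ι : Type*} [Fintype V] [Fintype B] [Fintype ι]
    [DecidableEq B]
    (ω : X → Matrix V V ℂ) (σ : ι → X → Matrix B B ℂ) : ℝ :=
  sInf {p : ℝ | 0 ≤ p ∧ p ≤ 1 ∧ ∃ (Mt Mb : ι → Matrix (V × B) (V × B) ℂ),
    (∀ a, (Mb a).PosSemidef ∧ Separable (Mb a)) ∧
    (∀ a, (ptranspose₁ (Mt a)).PosSemidef) ∧
    (∀ x x', (∑ a, ptrace₁ (Mt a * (ω x ⊗ₖ (1 : Matrix B B ℂ)))) =
      ∑ a, ptrace₁ (Mt a * (ω x' ⊗ₖ (1 : Matrix B B ℂ)))) ∧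
    (∀ a x, σ a x = ptrace₁
      ((((p : ℝ) : ℂ) • Mt a + (((1 - p : ℝ)) : ℂ) • Mb a) * (ω x ⊗ₖ (1 : Matrix B B ℂ))))}

lemma hw_apply (d : ℕ) [NeZero d] (a : Fin d × Fin d) (v i : Fin d) :
    HW d a v i = if v = i + a.1 then
      Complex.exp (2 * (Real.pi : ℂ) * Complex.I * ((i : ℕ) : ℂ) / (d : ℂ)) ^ (a.2 : ℕ) else 0 := by
  have hX : ∀ (p : ℕ) (v i : Fin d), (shiftX d ^ p) v i =
      if (v : ℕ) = ((i : ℕ) + p) % d then (1 : ℂ) else 0 := by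
    intro p
    induction p with
    | zero =>
      intro v i
      simp [Matrix.one_apply, Fin.ext_iff, Nat.mod_eq_of_lt i.isLt]
    | succ p ih =>
      intro v i
      rw [pow_succ, Matrix.mul_apply]
      have hlt : ((i : ℕ) + 1) % d < d := Nat.mod_lt _ (NeZero.pos d)
      rw [Finset.sum_eq_single (⟨((i : ℕ) + 1) % d, hlt⟩ : Fin d)]
      · rw [ih]
        simp [shiftX, Nat.add_comm, Nat.add_left_comm]
      · intro b _ hb
        have : ¬ ((b : ℕ) = ((i : ℕ) + 1) % d) := fun h => hb (Fin.ext h)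
        simp [shiftX, this]
      · simp
  have hZ : clockZ d = Matrix.diagonal (fun i : Fin d =>
      Complex.exp (2 * (Real.pi : ℂ) * Complex.I * ((i : ℕ) : ℂ) / (d : ℂ))) := by
    ext i j
    by_cases h : i = j <;> simp [clockZ, Matrix.diagonal_apply, h]
  unfold HW
  rw [hZ, Matrix.diagonal_pow, Matrix.mul_diagonal, hX]
  simp [Fin.ext_iff, Fin.val_add]

lemma phase_conj (d i q : ℕ) :
    Complex.exp (2 * (Real.pi : ℂ) * Complex.I * (i : ℂ) / (d : ℂ)) ^ q *
    star (Complex.exp (2 * (Real.pi : ℂ) * Complex.I * (i : ℂ) / (d : ℂ)) ^ q) = 1 := by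
  rw [star_pow, ← mul_pow]
  have : star (Complex.exp (2 * (Real.pi : ℂ) * Complex.I * (i : ℂ) / (d : ℂ))) =
      Complex.exp (-(2 * (Real.pi : ℂ) * Complex.I * (i : ℂ) / (d : ℂ))) := by
    rw [Complex.star_def, ← Complex.exp_conj]
    have h2 : (starRingEnd ℂ) 2 = 2 := Complex.conj_ofNat 2
    simp [neg_div, h2]
  rw [this, ← Complex.exp_add]
  simp

lemma hw_unitary (d : ℕ) [NeZero d] (a : Fin d × Fin d) : (HW d a)ᴴ * HW d a = 1 := by
  ext i j
  rw [Matrix.mul_apply]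
  simp only [Matrix.conjTranspose_apply, hw_apply]
  rw [Finset.sum_eq_single (j + a.1)]
  · by_cases h : i = j
    · subst h
      simp only [if_true, Matrix.one_apply_eq]
      rw [mul_comm, phase_conj]
    · have : ¬ (j + a.1 = i + a.1) := fun h' => h (add_right_cancel h').symm
      simp [this, h]
  · intro b _ hb
    simp [hb]
  · simp

lemma phase_sum (d : ℕ) [NeZero d] (i j : Fin d) :
    ∑ q : Fin d, Complex.exp (2 * (Real.pi : ℂ) * Complex.I * ((i : ℕ) : ℂ) / (d : ℂ)) ^ (q : ℕ) *
    star (Complex.exp (2 * (Real.pi : ℂ) * Complex.I * ((j : ℕ) : ℂ) / (d : ℂ)) ^ (q : ℕ)) =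
    if i = j then (d : ℂ) else 0 := by
  by_cases h : i = j
  · subst h
    simp only [phase_conj]
    simp
  · rw [if_neg h]
    have hd : (d : ℂ) ≠ 0 := by exact_mod_cast NeZero.ne d
    have hst : star (Complex.exp (2 * (Real.pi : ℂ) * Complex.I * ((j : ℕ) : ℂ) / (d : ℂ))) =
        Complex.exp (-(2 * (Real.pi : ℂ) * Complex.I * ((j : ℕ) : ℂ) / (d : ℂ))) := by
      rw [Complex.star_def, ← Complex.exp_conj]
      have h2 : (starRingEnd ℂ) 2 = 2 := Complex.conj_ofNat 2
      simp [neg_div, h2]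
    set ζ := Complex.exp (2 * (Real.pi : ℂ) * Complex.I * ((i : ℕ) : ℂ) / (d : ℂ)) *
      star (Complex.exp (2 * (Real.pi : ℂ) * Complex.I * ((j : ℕ) : ℂ) / (d : ℂ))) with hζ
    have h1 : ∀ q : Fin d,
        Complex.exp (2 * (Real.pi : ℂ) * Complex.I * ((i : ℕ) : ℂ) / (d : ℂ)) ^ (q : ℕ) *
        star (Complex.exp (2 * (Real.pi : ℂ) * Complex.I * ((j : ℕ) : ℂ) / (d : ℂ)) ^ (q : ℕ))
        = ζ ^ (q : ℕ) := by
      intro q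
      rw [star_pow, ← mul_pow]
    rw [Finset.sum_congr rfl (fun q _ => h1 q), Fin.sum_univ_eq_sum_range (fun q => ζ ^ q) d]
    rw [hst, ← Complex.exp_add] at hζ
    have hpow : ζ ^ d = 1 := by
      rw [hζ, ← Complex.exp_nat_mul, Complex.exp_eq_one_iff]
      refine ⟨(i : ℤ) - (j : ℤ), ?_⟩
      push_cast
      field_simp
      ring
    have hne : ζ ≠ 1 := by
      intro h1
      rw [hζ, Complex.exp_eq_one_iff] at h1
      obtain ⟨n, hn⟩ := h1
      have hpi : (2 * (Real.pi : ℂ) * Complex.I) ≠ 0 := Complex.two_pi_I_ne_zero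
      have h2 : (2 * (Real.pi : ℂ) * Complex.I) * (((i : ℕ) : ℂ) - ((j : ℕ) : ℂ)) =
          (2 * (Real.pi : ℂ) * Complex.I) * (n * d) := by
        field_simp at hn ⊢
        linear_combination hn
      have h3 := mul_left_cancel₀ hpi h2
      have h4 : ((i : ℕ) : ℤ) - ((j : ℕ) : ℤ) = n * (d : ℤ) := by exact_mod_cast h3
      have hi := i.isLt
      have hj := j.isLt
      apply h
      apply Fin.ext
      have h5 : |((i : ℕ) : ℤ) - ((j : ℕ) : ℤ)| < d := by rw [abs_lt]; omega
      have h6 := Int.eq_zero_of_abs_lt_dvd (Dvd.intro_left n h4.symm) h5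
      omega
    rw [geom_sum_eq hne, hpow]
    simp

lemma hw_twirl (d : ℕ) [NeZero d] (v v' i j : Fin d) :
    ∑ a, HW d a v i * star (HW d a v' j) = if v = v' ∧ i = j then (d : ℂ) else 0 := by
  rw [Fintype.sum_prod_type]
  simp only [hw_apply]
  have : ∀ p : Fin d, (∑ q : Fin d, (if v = i + p then
      Complex.exp (2 * (Real.pi : ℂ) * Complex.I * ((i : ℕ) : ℂ) / (d : ℂ)) ^ (q : ℕ) else 0) *
      star (if v' = j + p then
      Complex.exp (2 * (Real.pi : ℂ) * Complex.I * ((j : ℕ) : ℂ) / (d : ℂ)) ^ (q : ℕ) else 0)) =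
      if v = i + p ∧ v' = j + p ∧ i = j then (d : ℂ) else 0 := by
    intro p
    by_cases h1 : v = i + p
    · by_cases h2 : v' = j + p
      · simp only [if_pos h1, if_pos h2, phase_sum]
        simp [h1, h2]
      · simp [h1, h2]
    · simp [h1]
  rw [Finset.sum_congr rfl (fun p _ => this p), Finset.sum_eq_single (v - i)]
  · by_cases h : i = j
    · subst h
      simp [eq_comm]
    · simp [h]
  · intro p _ hp
    rw [if_neg]
    rintro ⟨h, -⟩
    exact hp (by rw [h]; simp)
  · simp

/-- The local unitary `U_a ⊗ 1`. -/
noncomputable def bigW (B : Type*) [DecidableEq B] (d : ℕ) (a : Fin d × Fin d) :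
    Matrix (Fin d × B) (Fin d × B) ℂ := HW d a ⊗ₖ (1 : Matrix B B ℂ)

lemma bigW_unitary {B : Type*} [Fintype B] [DecidableEq B] (d : ℕ) [NeZero d]
    (a : Fin d × Fin d) : (bigW B d a)ᴴ * bigW B d a = 1 := by
  unfold bigW
  rw [Matrix.conjTranspose_kronecker, ← Matrix.mul_kronecker_mul, hw_unitary]
  simp

lemma bigW_unitary' {B : Type*} [Fintype B] [DecidableEq B] (d : ℕ) [NeZero d]
    (a : Fin d × Fin d) : bigW B d a * (bigW B d a)ᴴ = 1 :=
  mul_eq_one_comm.mp (bigW_unitary d a)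

lemma sandwich_apply {B : Type*} [Fintype B] [DecidableEq B] (d : ℕ)
    (a : Fin d × Fin d) (R : Matrix (Fin d × B) (Fin d × B) ℂ) (v v' : Fin d) (b b' : B) :
    (bigW B d a * R * (bigW B d a)ᴴ) (v, b) (v', b') =
      ∑ j, ∑ i, HW d a v i * star (HW d a v' j) * R (i, b) (j, b') := by
  simp only [bigW, Matrix.mul_apply, Fintype.sum_prod_type, Matrix.conjTranspose_apply,
    Matrix.kroneckerMap_apply, Matrix.one_apply]
  simp [Finset.sum_mul, mul_ite, ite_mul, Finset.sum_ite_eq, apply_ite]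
  refine Finset.sum_congr rfl fun j _ => Finset.sum_congr rfl fun i _ => ?_
  ring

/-- The effective channel operators. -/
noncomputable def effK {B : Type*} [Fintype B] [DecidableEq B] (d : ℕ) (a : Fin d × Fin d)
    (R : Matrix (Fin d × B) (Fin d × B) ℂ) : Matrix (Fin d × B) (Fin d × B) ℂ :=
  (d : ℂ)⁻¹ • (bigW B d a * ptranspose₁ R * (bigW B d a)ᴴ)

lemma bell_apply (d : ℕ) (a : Fin d × Fin d) (v i v' j : Fin d) :
    bellPOVM d a (v, i) (v', j) = (d : ℂ)⁻¹ * HW d a v i * star (HW d a v' j) := by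
  simp only [bellPOVM, maxEnt, Matrix.mul_apply, Fintype.sum_prod_type,
    Matrix.conjTranspose_apply, Matrix.kroneckerMap_apply, Matrix.one_apply, Matrix.of_apply]
  have h1 : ∀ k l : Fin d, (∑ x : Fin d, ∑ y : Fin d,
      HW d a v x * (if i = y then (1 : ℂ) else 0) *
        if x = y ∧ k = l then (d : ℂ)⁻¹ else 0) =
      if k = l then HW d a v i * (d : ℂ)⁻¹ else 0 := by
    intro k l
    by_cases h : k = l <;> simp [h]
  simp only [h1]
  have h2 : ∀ z c w : ℂ, z * c * w = c * z * w := fun z c w => by ring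
  simp [apply_ite, h2]

lemma effK_apply {B : Type*} [Fintype B] [DecidableEq B] (d : ℕ)
    (a : Fin d × Fin d) (R : Matrix (Fin d × B) (Fin d × B) ℂ) (v v' : Fin d) (b b' : B) :
    effK d a R (v, b) (v', b') =
      (d : ℂ)⁻¹ * ∑ j, ∑ i, HW d a v i * star (HW d a v' j) * R (j, b) (i, b') := by
  simp only [effK, Matrix.smul_apply, sandwich_apply, smul_eq_mul, ptranspose₁, Matrix.of_apply]

lemma tele_eq {B : Type*} [Fintype B] [DecidableEq B] (d : ℕ) (a : Fin d × Fin d)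
    (ρ : Matrix (Fin d × B) (Fin d × B) ℂ) (ω : Matrix (Fin d) (Fin d) ℂ) :
    teleA (bellPOVM d a) ρ ω = ptrace₁ (effK d a ρ * (ω ⊗ₖ (1 : Matrix B B ℂ))) := by
  ext b b'
  simp only [teleA, ptraceVA, ptrace₁, Matrix.of_apply]
  refine Finset.sum_congr rfl fun v _ => ?_
  simp only [Matrix.mul_apply, Fintype.sum_prod_type, Matrix.reindex_apply,
    Matrix.submatrix_apply, Equiv.prodAssoc_symm_apply, Matrix.kroneckerMap_apply,
    Matrix.one_apply, bell_apply, effK_apply]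
  simp only [mul_ite, ite_mul, mul_one, mul_zero, zero_mul, Finset.sum_ite_eq,
    Finset.sum_ite_eq', Finset.mem_univ, if_true]
  rw [Finset.sum_comm]
  refine Finset.sum_congr rfl fun v' _ => ?_
  rw [Finset.sum_comm, Finset.mul_sum, Finset.sum_mul]
  refine Finset.sum_congr rfl fun j _ => ?_
  rw [Finset.mul_sum, Finset.sum_mul]
  refine Finset.sum_congr rfl fun i _ => ?_
  ring

lemma effK_sum {B : Type*} [Fintype B] [DecidableEq B] (d : ℕ) [NeZero d]
    (R : Matrix (Fin d × B) (Fin d × B) ℂ) :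
    ∑ a, effK d a R = (1 : Matrix (Fin d) (Fin d) ℂ) ⊗ₖ ptrace₁ R := by
  have hd : (d : ℂ) ≠ 0 := by exact_mod_cast NeZero.ne d
  ext ⟨v, b⟩ ⟨v', b'⟩
  simp only [Matrix.sum_apply, effK, Matrix.smul_apply, sandwich_apply, smul_eq_mul]
  rw [← Finset.mul_sum, Finset.sum_comm]
  have : ∀ j : Fin d, (∑ a, ∑ i, HW d a v i * star (HW d a v' j) *
      ptranspose₁ R (i, b) (j, b')) = if v = v' then (d : ℂ) * R (j, b) (j, b') else 0 := by
    intro j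
    rw [Finset.sum_comm]
    simp only [← Finset.sum_mul, hw_twirl]
    by_cases h : v = v' <;> simp [h, ptranspose₁]
  simp only [this, Matrix.kroneckerMap_apply, Matrix.one_apply, ptrace₁, Matrix.of_apply]
  by_cases h : v = v'
  · simp [h, ← Finset.mul_sum, hd]
  · simp [h]

lemma trace_ptrace {B : Type*} [Fintype B] (d : ℕ)
    (R : Matrix (Fin d × B) (Fin d × B) ℂ) : (ptrace₁ R).trace = R.trace := by
  simp only [Matrix.trace, Matrix.diag, ptrace₁, Matrix.of_apply, Fintype.sum_prod_type]
  rw [Finset.sum_comm]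

lemma trace_pt {B : Type*} [Fintype B] (d : ℕ)
    (R : Matrix (Fin d × B) (Fin d × B) ℂ) : (ptranspose₁ R).trace = R.trace := by
  simp [Matrix.trace, ptranspose₁]

lemma pt_pt {V B : Type*} (R : Matrix (V × B) (V × B) ℂ) :
    ptranspose₁ (ptranspose₁ R) = R := by
  ext p q; simp [ptranspose₁]

lemma pt_sub {V B : Type*} (R S : Matrix (V × B) (V × B) ℂ) :
    ptranspose₁ (R - S) = ptranspose₁ R - ptranspose₁ S := by
  ext p q; simp [ptranspose₁]

lemma effK_psd {B : Type*} [Fintype B] [DecidableEq B] (d : ℕ) (a : Fin d × Fin d)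
    (R : Matrix (Fin d × B) (Fin d × B) ℂ) (h : (ptranspose₁ R).PosSemidef) :
    (effK d a R).PosSemidef := by
  unfold effK
  exact (h.mul_mul_conjTranspose_same _).smul (by positivity)

lemma ptrace_herm {B : Type*} (d : ℕ)
    (R : Matrix (Fin d × B) (Fin d × B) ℂ) (h : (ptranspose₁ R).IsHermitian) :
    (ptrace₁ R).IsHermitian := by
  ext b b'
  simp only [ptrace₁, Matrix.conjTranspose_apply, Matrix.of_apply, star_sum]
  refine Finset.sum_congr rfl fun v _ => ?_
  exact h.apply (v, b) (v, b')

lemma effK_sub {B : Type*} [Fintype B] [DecidableEq B] (d : ℕ) (a : Fin d × Fin d)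
    (R S : Matrix (Fin d × B) (Fin d × B) ℂ) :
    effK d a (R - S) = effK d a R - effK d a S := by
  simp [effK, pt_sub, Matrix.mul_sub, Matrix.sub_mul, smul_sub]

lemma ptrace_sub {V B : Type*} [Fintype V] (R S : Matrix (V × B) (V × B) ℂ) :
    ptrace₁ (R - S) = ptrace₁ R - ptrace₁ S := by
  ext p q; simp [ptrace₁]

lemma tomo_zero {B X : Type*} [Fintype B] [DecidableEq B] (d : ℕ)
    (ω : X → Matrix (Fin d) (Fin d) ℂ) (htomo : TomoComplete ω)
    (D : Matrix (Fin d × B) (Fin d × B) ℂ)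
    (h : ∀ x, ptrace₁ (D * (ω x ⊗ₖ (1 : Matrix B B ℂ))) = 0) : D = 0 := by
  have hF : ∀ (E : Matrix (Fin d) (Fin d) ℂ) (b b' : B),
      ptrace₁ (D * (E ⊗ₖ (1 : Matrix B B ℂ))) b b' =
        ∑ v, ∑ v', D (v, b) (v', b') * E v' v := by
    intro E b b'
    simp [ptrace₁, Matrix.mul_apply, Fintype.sum_prod_type, Matrix.one_apply]
  ext ⟨v, b⟩ ⟨v', b'⟩
  let L : Matrix (Fin d) (Fin d) ℂ →ₗ[ℂ] ℂ :=
    { toFun := fun E => ∑ v, ∑ v', D (v, b) (v', b') * E v' v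
      map_add' := by intro E F; simp [mul_add, Finset.sum_add_distrib]
      map_smul' := by
        intro c E
        simp only [Matrix.smul_apply, smul_eq_mul, RingHom.id_apply, Finset.mul_sum]
        refine Finset.sum_congr rfl fun _ _ => Finset.sum_congr rfl fun _ _ => ?_
        ring }
  have hspan : Submodule.span ℝ (Set.range ω) ≤ LinearMap.ker (L.restrictScalars ℝ) := by
    rw [Submodule.span_le]
    rintro _ ⟨x, rfl⟩
    have := congrFun (congrFun (h x) b) b'
    rw [hF] at this
    simpa [L] using this
  have hH : ∀ H : Matrix (Fin d) (Fin d) ℂ, H.IsHermitian → L H = 0 := by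
    intro H hH
    have := hspan (htomo H hH)
    simpa using this
  have hall : ∀ E : Matrix (Fin d) (Fin d) ℂ, L E = 0 := by
    intro E
    have h1 := hH (E + Eᴴ) (by simp [Matrix.IsHermitian, add_comm])
    have h2 := hH (Complex.I • (E - Eᴴ)) (by
      simp [Matrix.IsHermitian, Matrix.conjTranspose_smul, smul_sub, neg_add_eq_sub])
    rw [map_add] at h1
    rw [map_smul, map_sub, smul_eq_mul] at h2
    have h3 := (mul_eq_zero.mp h2).resolve_left Complex.I_ne_zero
    linear_combination (h1 + h3) / 2
  have := hall (Matrix.single v' v 1)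
  simp only [L, LinearMap.coe_mk, AddHom.coe_mk, Matrix.single_apply] at this
  rw [Finset.sum_eq_single v, Finset.sum_eq_single v'] at this
  · simpa using this
  · intro w _ hw; simp [hw.symm]
  · simp
  · intro w _ hw; simp [hw.symm]
  · simp

/-- The inverse (averaged) decoding map. -/
noncomputable def decode {B : Type*} [Fintype B] [DecidableEq B] (d : ℕ)
    (M : Fin d × Fin d → Matrix (Fin d × B) (Fin d × B) ℂ) :
    Matrix (Fin d × B) (Fin d × B) ℂ :=
  (d : ℂ)⁻¹ • ∑ a, (bigW B d a)ᴴ * M a * bigW B d a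

lemma decode_psd {B : Type*} [Fintype B] [DecidableEq B] (d : ℕ)
    (M : Fin d × Fin d → Matrix (Fin d × B) (Fin d × B) ℂ) (h : ∀ a, (M a).PosSemidef) :
    (decode d M).PosSemidef := by
  unfold decode
  refine Matrix.PosSemidef.smul ?_ (by positivity)
  exact Matrix.posSemidef_sum _ fun a _ => (h a).conjTranspose_mul_mul_same _

lemma decode_trace {B : Type*} [Fintype B] [DecidableEq B] (d : ℕ) [NeZero d]
    (M : Fin d × Fin d → Matrix (Fin d × B) (Fin d × B) ℂ) (r : Matrix B B ℂ)
    (h : ∑ a, M a = (1 : Matrix (Fin d) (Fin d) ℂ) ⊗ₖ r) :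
    (decode d M).trace = r.trace := by
  have hd : (d : ℂ) ≠ 0 := by exact_mod_cast NeZero.ne d
  have h1 : ∀ a, ((bigW B d a)ᴴ * M a * bigW B d a).trace = (M a).trace := by
    intro a
    rw [Matrix.trace_mul_comm, ← Matrix.mul_assoc, bigW_unitary', Matrix.one_mul]
  unfold decode
  rw [Matrix.trace_smul, Matrix.trace_sum, Finset.sum_congr rfl (fun a _ => h1 a),
    ← Matrix.trace_sum, h, Matrix.trace_kronecker]
  simp [hd]

lemma decode_effK {B : Type*} [Fintype B] [DecidableEq B] (d : ℕ) [NeZero d]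
    (R : Matrix (Fin d × B) (Fin d × B) ℂ) :
    decode d (fun a => effK d a R) = ptranspose₁ R := by
  have hd : (d : ℂ) ≠ 0 := by exact_mod_cast NeZero.ne d
  have h1 : ∀ a, (bigW B d a)ᴴ * effK d a R * bigW B d a = (d : ℂ)⁻¹ • ptranspose₁ R := by
    intro a
    unfold effK
    rw [Matrix.mul_smul, Matrix.smul_mul]
    congr 1
    calc _ = ((bigW B d a)ᴴ * bigW B d a) * ptranspose₁ R * ((bigW B d a)ᴴ * bigW B d a) := by
          simp only [Matrix.mul_assoc]
      _ = _ := by rw [bigW_unitary]; simp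
  unfold decode
  rw [Finset.sum_congr rfl (fun a _ => h1 a)]
  rw [Finset.sum_const, ← Nat.cast_smul_eq_nsmul ℂ, smul_smul, smul_smul]
  have h2 : (d : ℂ)⁻¹ * (((Finset.univ : Finset (Fin d × Fin d)).card : ℂ) * (d : ℂ)⁻¹) = 1 := by
    simp [hd]
  rw [← mul_assoc] at h2
  rw [h2, one_smul]

/-- for a full Bell state measurement and a tomographically complete set of
inputs, the negativity-estimation SDP value equals the entanglement negativity. -/
theorem negativity_lower_bound_tight {B X : Type*} [Fintype B] [DecidableEq B]
    (d : ℕ) (hd : 1 ≤ d)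
    (ρ : Matrix (Fin d × B) (Fin d × B) ℂ) (hρ : IsState ρ)
    (ω : X → Matrix (Fin d) (Fin d) ℂ) (hω : ∀ x, IsState (ω x))
    (htomo : TomoComplete ω) :
    sInf {t : ℝ | ∃ (Mp Mm : Fin d × Fin d → Matrix (Fin d × B) (Fin d × B) ℂ)
        (ρp ρm : Matrix B B ℂ),
        (∀ a, (Mp a).PosSemidef) ∧ (∀ a, (Mm a).PosSemidef) ∧
        ρp.IsHermitian ∧ ρm.IsHermitian ∧
        (∀ a x, teleA (bellPOVM d a) ρ (ω x) =
          ptrace₁ (Mp a * (ω x ⊗ₖ (1 : Matrix B B ℂ))) -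
            ptrace₁ (Mm a * (ω x ⊗ₖ (1 : Matrix B B ℂ)))) ∧
        (∑ a, Mp a) = (1 : Matrix (Fin d) (Fin d) ℂ) ⊗ₖ ρp ∧
        (∑ a, Mm a) = (1 : Matrix (Fin d) (Fin d) ℂ) ⊗ₖ ρm ∧
        t = (ρm.trace).re} = negativity ρ := by
  haveI : NeZero d := ⟨by omega⟩
  unfold negativity
  congr 1
  ext t
  constructor
  · rintro ⟨Mp, Mm, ρp, ρm, hMp, hMm, -, -, hσ, -, hsm, rfl⟩
    have hK : ∀ a, effK d a ρ = Mp a - Mm a := by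
      intro a
      rw [← sub_eq_zero]
      refine tomo_zero d ω htomo _ fun x => ?_
      have := hσ a x
      rw [tele_eq] at this
      rw [Matrix.sub_mul, Matrix.sub_mul, ptrace_sub, ptrace_sub, this, sub_self]
    refine ⟨ptranspose₁ (decode d Mp), ptranspose₁ (decode d Mm), ?_, ?_, ?_, ?_⟩
    · rw [← pt_sub, ← pt_pt ρ, ← decode_effK d ρ]
      congr 1
      simp [decode, hK, Matrix.mul_sub, Matrix.sub_mul, smul_sub]
    · rw [pt_pt]; exact decode_psd d Mp hMp
    · rw [pt_pt]; exact decode_psd d Mm hMm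
    · rw [trace_pt, decode_trace d Mm ρm hsm]
  · rintro ⟨ρp, ρm, hρe, hp, hm, rfl⟩
    refine ⟨fun a => effK d a ρp, fun a => effK d a ρm, ptrace₁ ρp, ptrace₁ ρm,
      fun a => effK_psd d a _ hp, fun a => effK_psd d a _ hm,
      ptrace_herm d _ hp.isHermitian, ptrace_herm d _ hm.isHermitian, ?_,
      effK_sum d ρp, effK_sum d ρm, ?_⟩
    · intro a x
      rw [tele_eq, ← ptrace_sub, ← Matrix.sub_mul, ← effK_sub, ← hρe]
    · rw [trace_ptrace]

end Tele
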